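/- arXiv:2605.16876 — 2 statements merged into one kernel-verified Lean document; each statement's English description precedes it below -/
import Mathlib

section
/- Let f : (0,∞) → (0,∞) be a continuous, strictly monotone function with f(1) = 1 that is operator monotone (i.e., for every k and all k×k positive definite matrices A ≤ B in the Löwner order, f(A) ≤ f(B), where f is applied via the functional calculus), and let σ_f denote the associated Kubo–Ando operator mean A σ_f B = A^{1/2} f(A^{-1/2} B A^{-1/2}) A^{1/2}. Then for all n×n positive definite complex matrices A and B, the alternative mean X = f(A⁻¹ ♯ B) · A · f(A⁻¹ ♯ B) is the unique positive definite matrix X satisfying (A ♯ X⁻¹) σ_f (B ♯ X⁻¹) = I. -/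
/-!
For positive definite `A` and `B`, the geometric mean `A ♯ B` is the unique positive definite
solution `C` of the Riccati equation `C A⁻¹ C = B` (`geom_riccati`, `geom_eq_of_riccati`).

Let `X` be positive definite, `C = A ♯ X⁻¹`, `D = B ♯ X⁻¹` and `W = C^{-1/2} D C^{-1/2}`. The
equation `C σ_f D = 1` says `f(W) = C⁻¹`. Hence `W` commutes with `C`, so `D = W C = C W`, and
`C A⁻¹ C = X⁻¹ = D B⁻¹ D` reduces to `W A W = B`, that is `W = A⁻¹ ♯ B`. Therefore
`X = C⁻¹ A C⁻¹ = f(W) A f(W)`. Every step reverses: starting from `Z = A⁻¹ ♯ B` and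
`X = f(Z) A f(Z)`, the Riccati equations give `A ♯ X⁻¹ = f(Z)⁻¹` and `B ♯ X⁻¹ = Z f(Z)⁻¹`.
-/

open Matrix
open scoped ComplexOrder

/-- Functional calculus for Hermitian matrices: apply `f` to the eigenvalues. -/
noncomputable def herm {n : ℕ} (f : ℝ → ℝ) (A : Matrix (Fin n) (Fin n) ℂ) :
    Matrix (Fin n) (Fin n) ℂ :=
  if hA : A.IsHermitian then
    (hA.eigenvectorUnitary : Matrix (Fin n) (Fin n) ℂ) *
      Matrix.diagonal (fun i => (f (hA.eigenvalues i) : ℂ)) *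
      (star (hA.eigenvectorUnitary : Matrix (Fin n) (Fin n) ℂ))
  else 0

/-- Square root of a positive definite matrix. -/
noncomputable def msqrt {n : ℕ} (A : Matrix (Fin n) (Fin n) ℂ) : Matrix (Fin n) (Fin n) ℂ :=
  herm Real.sqrt A

/-- Logarithm of a positive definite matrix. -/
noncomputable def mlog {n : ℕ} (A : Matrix (Fin n) (Fin n) ℂ) : Matrix (Fin n) (Fin n) ℂ :=
  herm Real.log A

/-- Real power of a positive definite matrix. -/
noncomputable def mpow {n : ℕ} (A : Matrix (Fin n) (Fin n) ℂ) (t : ℝ) :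
    Matrix (Fin n) (Fin n) ℂ :=
  herm (fun x => x ^ t) A

/-- Metric geometric mean `A ♯ B = A^{1/2} (A^{-1/2} B A^{-1/2})^{1/2} A^{1/2}`. -/
noncomputable def geom {n : ℕ} (A B : Matrix (Fin n) (Fin n) ℂ) : Matrix (Fin n) (Fin n) ℂ :=
  msqrt A * msqrt ((msqrt A)⁻¹ * B * (msqrt A)⁻¹) * msqrt A

/-- The solution set `Γ(ω; A₁,…,A_m)` of the spectral-geometric-mean equation
`∑ᵢ wᵢ log(Aᵢ ♯ X⁻¹) = 0` among positive definite matrices. -/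
noncomputable def Gamma {m n : ℕ} (w : Fin m → ℝ) (A : Fin m → Matrix (Fin n) (Fin n) ℂ) :
    Set (Matrix (Fin n) (Fin n) ℂ) :=
  {X | X.PosDef ∧ ∑ i, w i • mlog (geom (A i) X⁻¹) = 0}

/-- The Kubo–Ando operator mean `A σ_f B = A^{1/2} f(A^{-1/2} B A^{-1/2}) A^{1/2}`. -/
noncomputable def kubo {n : ℕ} (f : ℝ → ℝ) (A B : Matrix (Fin n) (Fin n) ℂ) :
    Matrix (Fin n) (Fin n) ℂ :=
  msqrt A * herm f ((msqrt A)⁻¹ * B * (msqrt A)⁻¹) * msqrt A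

section FunctionalCalculus

variable {n : ℕ} {A P Z : Matrix (Fin n) (Fin n) ℂ}

/-- On Hermitian matrices `herm` is Mathlib's continuous functional calculus. -/
lemma herm_eq_cfc (f : ℝ → ℝ) (hA : A.IsHermitian) : herm f A = cfc f A := by
  rw [hA.cfc_eq, herm, dif_pos hA, Matrix.IsHermitian.cfc, Unitary.conjStarAlgAut_apply]
  rfl

lemma herm_posDef {f : ℝ → ℝ} (hf : ∀ x : ℝ, 0 < x → 0 < f x) (hA : A.PosDef) :
    (herm f A).PosDef := by
  rw [herm, dif_pos hA.isHermitian]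
  refine Matrix.PosDef.mul_mul_conjTranspose_same ?_ ?_
  · rw [Matrix.posDef_diagonal_iff]
    intro i
    exact_mod_cast hf _ (hA.eigenvalues_pos i)
  · exact Matrix.vecMul_injective_of_isUnit
      (Unitary.toUnits hA.isHermitian.eigenvectorUnitary).isUnit

lemma commute_herm (f : ℝ → ℝ) (hA : A.IsHermitian) (h : Commute A Z) :
    Commute (herm f A) Z := by
  rw [herm_eq_cfc f hA]
  exact h.cfc_real f

lemma msqrt_posDef (hA : A.PosDef) : (msqrt A).PosDef :=
  herm_posDef (fun _ => Real.sqrt_pos.mpr) hA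

lemma spectrum_pos (hA : A.PosDef) {x : ℝ} (hx : x ∈ spectrum ℝ A) : 0 < x := by
  rw [hA.isHermitian.spectrum_real_eq_range_eigenvalues] at hx
  obtain ⟨i, rfl⟩ := hx
  exact hA.eigenvalues_pos i

lemma msqrt_mul_self (hA : A.PosDef) : msqrt A * msqrt A = A := by
  have hsa : IsSelfAdjoint A := hA.isHermitian
  rw [msqrt, herm_eq_cfc _ hA.isHermitian, ← cfc_mul ..]
  conv_rhs => rw [← cfc_id ℝ A]
  exact cfc_congr fun x hx => Real.mul_self_sqrt (spectrum_pos hA hx).le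

lemma msqrt_mul_self_eq (hP : P.PosDef) : msqrt (P * P) = P := by
  have hsa : IsSelfAdjoint P := hP.isHermitian
  have hsq : P * P = cfc (fun x : ℝ => x * x) P := by
    rw [cfc_mul .., cfc_id' ℝ P]
  have hH : (P * P).IsHermitian := by
    rw [hsq]; exact cfc_predicate (p := IsSelfAdjoint) _ P
  rw [msqrt, herm_eq_cfc _ hH, hsq, ← cfc_comp' ..]
  conv_rhs => rw [← cfc_id ℝ P]
  exact cfc_congr fun x hx => Real.sqrt_mul_self (spectrum_pos hP hx).le

lemma posDef_conj (hP : P.PosDef) (hA : A.PosDef) : (P * A * P).PosDef := by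
  have h := hA.mul_mul_conjTranspose_same (Matrix.vecMul_injective_of_isUnit hP.isUnit)
  rwa [hP.isHermitian.eq] at h

lemma mul_inv_of_posDef (hP : P.PosDef) : P * P⁻¹ = 1 :=
  Matrix.mul_nonsing_inv _ ((Matrix.isUnit_iff_isUnit_det _).mp hP.isUnit)

lemma inv_mul_of_posDef (hP : P.PosDef) : P⁻¹ * P = 1 :=
  Matrix.nonsing_inv_mul _ ((Matrix.isUnit_iff_isUnit_det _).mp hP.isUnit)

lemma inv_inv_of_posDef (hP : P.PosDef) : P⁻¹⁻¹ = P :=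
  Matrix.nonsing_inv_nonsing_inv _ ((Matrix.isUnit_iff_isUnit_det _).mp hP.isUnit)

end FunctionalCalculus

section Riccati

variable {n : ℕ} {A B C : Matrix (Fin n) (Fin n) ℂ}

lemma geom_posDef (hA : A.PosDef) (hB : B.PosDef) : (geom A B).PosDef :=
  posDef_conj (msqrt_posDef hA) (msqrt_posDef (posDef_conj (msqrt_posDef hA).inv hB))

/-- `A ♯ B` solves the Riccati equation `C A⁻¹ C = B`. -/
lemma geom_riccati (hA : A.PosDef) (hB : B.PosDef) :
    geom A B * A⁻¹ * geom A B = B := by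
  have hS := msqrt_posDef hA
  have hR := msqrt_mul_self (posDef_conj hS.inv hB)
  have h1 := mul_inv_of_posDef hS
  have h2 := inv_mul_of_posDef hS
  have hAi : A⁻¹ = (msqrt A)⁻¹ * (msqrt A)⁻¹ := by
    conv_lhs => rw [← msqrt_mul_self hA]
    rw [Matrix.mul_inv_rev]
  unfold geom
  rw [hAi]
  generalize msqrt ((msqrt A)⁻¹ * B * (msqrt A)⁻¹) = R at *
  generalize (msqrt A)⁻¹ = T at *
  generalize msqrt A = S at *
  calc S * R * S * (T * T) * (S * R * S)
      = S * R * (S * T) * (T * S) * R * S := by noncomm_ring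
    _ = S * (R * R) * S := by rw [h1, h2]; noncomm_ring
    _ = (S * T) * B * (T * S) := by rw [hR]; noncomm_ring
    _ = B := by rw [h1, h2, one_mul, mul_one]

/-- The Riccati equation `C A⁻¹ C = B` has no positive definite solution besides `A ♯ B`:
it says that `A^{-1/2} C A^{-1/2}` is a square root of `A^{-1/2} B A^{-1/2}`, and positive
definite square roots are unique. -/
lemma geom_eq_of_riccati (hA : A.PosDef) (hC : C.PosDef) (h : C * A⁻¹ * C = B) :
    geom A B = C := by
  have hS := msqrt_posDef hA
  have h1 := mul_inv_of_posDef hS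
  have h2 := inv_mul_of_posDef hS
  have hAi : A⁻¹ = (msqrt A)⁻¹ * (msqrt A)⁻¹ := by
    conv_lhs => rw [← msqrt_mul_self hA]
    rw [Matrix.mul_inv_rev]
  have hM : (msqrt A)⁻¹ * B * (msqrt A)⁻¹ =
      ((msqrt A)⁻¹ * C * (msqrt A)⁻¹) * ((msqrt A)⁻¹ * C * (msqrt A)⁻¹) := by
    rw [← h, hAi]; noncomm_ring
  rw [geom, hM, msqrt_mul_self_eq (posDef_conj hS.inv hC)]
  generalize (msqrt A)⁻¹ = T at *
  generalize msqrt A = S at *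
  calc S * (T * C * T) * S = (S * T) * C * (T * S) := by noncomm_ring
    _ = C := by rw [h1, h2, one_mul, mul_one]

end Riccati

theorem stmt16 {n : ℕ} (f : ℝ → ℝ)
    (hf_pos : ∀ x : ℝ, 0 < x → 0 < f x)
    (hf_cont : ContinuousOn f (Set.Ioi 0))
    (hf_mono : StrictMonoOn f (Set.Ioi 0))
    (hf_one : f 1 = 1)
    (hf_opmono : ∀ (k : ℕ) (A B : Matrix (Fin k) (Fin k) ℂ),
      A.PosDef → B.PosDef → (B - A).PosSemidef → (herm f B - herm f A).PosSemidef)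
    (A B : Matrix (Fin n) (Fin n) ℂ) (hA : A.PosDef) (hB : B.PosDef) :
    (herm f (geom A⁻¹ B) * A * herm f (geom A⁻¹ B)).PosDef ∧
    kubo f (geom A (herm f (geom A⁻¹ B) * A * herm f (geom A⁻¹ B))⁻¹)
      (geom B (herm f (geom A⁻¹ B) * A * herm f (geom A⁻¹ B))⁻¹) = 1 ∧
    ∀ X : Matrix (Fin n) (Fin n) ℂ, X.PosDef →
      kubo f (geom A X⁻¹) (geom B X⁻¹) = 1 →
      X = herm f (geom A⁻¹ B) * A * herm f (geom A⁻¹ B) := by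
  have hZ := geom_posDef hA.inv hB
  have hZr : geom A⁻¹ B * A * geom A⁻¹ B = B := by
    have h := geom_riccati hA.inv hB
    rwa [inv_inv_of_posDef hA] at h
  refine ⟨posDef_conj (herm_posDef hf_pos hZ) hA, ?_, ?_⟩
  · -- `X⁻¹ = F⁻¹ A⁻¹ F⁻¹` with `F = f(Z)`, so `A ♯ X⁻¹ = F⁻¹` by the Riccati equation.
    generalize geom A⁻¹ B = Z at *
    have hF := herm_posDef hf_pos hZ
    have hFZ : Commute (herm f Z) Z := commute_herm f hZ.isHermitian (Commute.refl Z)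
    generalize hFdef : herm f Z = F at *
    have hC := hF.inv
    have hF1 := mul_inv_of_posDef hF
    have hF2 := inv_mul_of_posDef hF
    have hXi : (F * A * F)⁻¹ = F⁻¹ * A⁻¹ * F⁻¹ := by
      rw [Matrix.mul_inv_rev, Matrix.mul_inv_rev, mul_assoc]
    have hgA : geom A (F * A * F)⁻¹ = F⁻¹ := geom_eq_of_riccati hA hC hXi.symm
    have hCZ : Commute F⁻¹ Z := by
      calc F⁻¹ * Z = F⁻¹ * (Z * F) * F⁻¹ := by rw [mul_assoc, mul_assoc, hF1, mul_one]
        _ = (F⁻¹ * F) * Z * F⁻¹ := by rw [← hFZ.eq]; noncomm_ring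
        _ = Z * F⁻¹ := by rw [hF2, one_mul]
    have hS := msqrt_posDef hC
    have hSS := msqrt_mul_self hC
    have hSZ : Commute (msqrt F⁻¹) Z := commute_herm _ hC.isHermitian hCZ
    have hS1 := mul_inv_of_posDef hS
    have hS2 := inv_mul_of_posDef hS
    have hD : (msqrt F⁻¹ * Z * msqrt F⁻¹).PosDef := posDef_conj hS hZ
    have hDeq : msqrt F⁻¹ * Z * msqrt F⁻¹ = Z * F⁻¹ := by
      rw [hSZ.eq, mul_assoc, hSS]
    have hZ1 := mul_inv_of_posDef hZ
    have hZ2 := inv_mul_of_posDef hZ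
    have hgB : geom B (F * A * F)⁻¹ = msqrt F⁻¹ * Z * msqrt F⁻¹ := by
      refine geom_eq_of_riccati hB hD ?_
      rw [hDeq, hXi, ← hZr, Matrix.mul_inv_rev, Matrix.mul_inv_rev]
      calc Z * F⁻¹ * (Z⁻¹ * (A⁻¹ * Z⁻¹)) * (Z * F⁻¹)
          = Z * F⁻¹ * Z⁻¹ * A⁻¹ * (Z⁻¹ * Z) * F⁻¹ := by noncomm_ring
        _ = F⁻¹ * A⁻¹ * F⁻¹ := by
          rw [hZ2, mul_one, ← hCZ.eq, mul_assoc F⁻¹ Z, hZ1, mul_one]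
    rw [kubo, hgA, hgB]
    have hinner : (msqrt F⁻¹)⁻¹ * (msqrt F⁻¹ * Z * msqrt F⁻¹) * (msqrt F⁻¹)⁻¹ = Z := by
      calc _ = ((msqrt F⁻¹)⁻¹ * msqrt F⁻¹) * Z * (msqrt F⁻¹ * (msqrt F⁻¹)⁻¹) := by
            noncomm_ring
        _ = Z := by rw [hS1, hS2, one_mul, mul_one]
    have hSF : Commute (msqrt F⁻¹) F :=
      commute_herm _ hC.isHermitian (by rw [Commute, SemiconjBy, hF1, hF2])
    rw [hinner, hFdef, hSF.eq, mul_assoc, hSS, hF1]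
  · intro X hX hk
    have hCr := geom_riccati hA hX.inv
    have hDr := geom_riccati hB hX.inv
    have hC := geom_posDef hA hX.inv
    have hD := geom_posDef hB hX.inv
    rw [kubo] at hk
    generalize geom A X⁻¹ = C at *
    generalize geom B X⁻¹ = D at *
    have hS := msqrt_posDef hC
    have hSS := msqrt_mul_self hC
    have hS1 := mul_inv_of_posDef hS
    have hS2 := inv_mul_of_posDef hS
    -- `W = C^{-1/2} D C^{-1/2}`; the hypothesis `hk` says `f(W) = C⁻¹`, so `W` commutes with `C`.
    have hWpd := posDef_conj hS.inv hD
    have hDW : msqrt C * ((msqrt C)⁻¹ * D * (msqrt C)⁻¹) * msqrt C = D := by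
      calc _ = (msqrt C * (msqrt C)⁻¹) * D * ((msqrt C)⁻¹ * msqrt C) := by noncomm_ring
        _ = D := by rw [hS1, hS2, one_mul, mul_one]
    generalize (msqrt C)⁻¹ * D * (msqrt C)⁻¹ = W at *
    have hFW : Commute (herm f W) W := commute_herm f hWpd.isHermitian (Commute.refl W)
    have hFC : herm f W = C⁻¹ := by
      rw [← hSS, Matrix.mul_inv_rev]
      calc herm f W = ((msqrt C)⁻¹ * msqrt C) * herm f W * (msqrt C * (msqrt C)⁻¹) := by
            rw [hS1, hS2, one_mul, mul_one]
        _ = (msqrt C)⁻¹ * (msqrt C * herm f W * msqrt C) * (msqrt C)⁻¹ := by noncomm_ring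
        _ = _ := by rw [hk, mul_one]
    have hC1 := mul_inv_of_posDef hC
    have hC2 := inv_mul_of_posDef hC
    have hCW : Commute C W := by
      rw [hFC] at hFW
      calc C * W = C * (W * C⁻¹) * C := by rw [mul_assoc, mul_assoc, hC2, mul_one]
        _ = (C * C⁻¹) * W * C := by rw [← hFW.eq]; noncomm_ring
        _ = W * C := by rw [hC1, one_mul]
    have hSW : Commute (msqrt C) W := commute_herm _ hC.isHermitian hCW
    have hDeq : D = W * C := by
      rw [← hDW, hSW.eq, mul_assoc, hSS]
    -- Cancelling `C` on both sides of `C A⁻¹ C = X⁻¹ = D B⁻¹ D` leaves `W B⁻¹ W = A⁻¹`.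
    have hWB : W * B⁻¹ * W = A⁻¹ := by
      have h : C * (W * B⁻¹ * W) * C = C * A⁻¹ * C := by
        rw [hCr, ← hDr, hDeq]
        calc C * (W * B⁻¹ * W) * C = (C * W) * B⁻¹ * (W * C) := by noncomm_ring
          _ = W * C * B⁻¹ * (W * C) := by rw [hCW.eq]
      calc W * B⁻¹ * W = (C⁻¹ * C) * (W * B⁻¹ * W) * (C * C⁻¹) := by
            rw [hC1, hC2, one_mul, mul_one]
        _ = C⁻¹ * (C * (W * B⁻¹ * W) * C) * C⁻¹ := by noncomm_ring
        _ = (C⁻¹ * C) * A⁻¹ * (C * C⁻¹) := by rw [h]; noncomm_ring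
        _ = A⁻¹ := by rw [hC1, hC2, one_mul, mul_one]
    have hW : geom A⁻¹ B = W := by
      refine geom_eq_of_riccati hA.inv hWpd ?_
      rw [← hWB, Matrix.mul_inv_rev, Matrix.mul_inv_rev, inv_inv_of_posDef hB]
      calc W * (W⁻¹ * (B * W⁻¹)) * W = (W * W⁻¹) * B * (W⁻¹ * W) := by noncomm_ring
        _ = B := by
          rw [mul_inv_of_posDef hWpd, inv_mul_of_posDef hWpd, one_mul, mul_one]
    rw [hW, hFC, ← inv_inv_of_posDef hX, ← hCr, Matrix.mul_inv_rev, Matrix.mul_inv_rev,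
      inv_inv_of_posDef hA, mul_assoc]
end

section
/- Let g : (0,∞) → ℝ be a continuous, strictly increasing function with g(1) = 0 and g′(1) = 1 that is operator monotone (i.e., for every k and all k×k positive definite matrices A ≤ B in the Löwner order, g(A) ≤ g(B), where g is applied via the functional calculus). Let ω = (w₁,…,w_m) be a weight vector and let A₁,…,A_m be n×n positive definite complex matrices with αI ≤ A_j ≤ βI for all j, for some 0 < α ≤ β. Then every positive definite matrix X satisfying Σᵢ₌₁^m wᵢ g(Aᵢ ♯ X⁻¹) = 0 satisfies αI ≤ X ≤ βI. -/
/-!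
Write `G = A ♯ X⁻¹` and `R = X^{1/2}`. Then `G` is positive definite and solves the Riccati equation
`G X G = A` (`geom_spec`). The positive definite matrix `H_c = √c R⁻¹` solves `H_c X H_c = c I`.

Solutions of the Riccati equation are monotone in the right-hand side (`riccati_mono`): after
conjugation by `R` this is operator monotonicity of the square root. Hence `A ≥ α I` gives
`H_α ≤ A ♯ X⁻¹`, and operator monotonicity of `g` gives `g(H_α) ≤ g(Aᵢ ♯ X⁻¹)` for each `i`.
Averaging with the weights yields `g(H_α) ≤ 0`. If `X v = lam v`, then
`g(H_α) v = g(√α / √lam) v`, so `g(√α / √lam) ≤ 0 = g(1)`, and strict monotonicity gives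
`α ≤ lam`. The upper bound is the same argument with all inequalities reversed.
-/

open Matrix
open scoped ComplexOrder

/-- The functional calculus acts on an eigenvector through its eigenvalue: in the coordinates
`y = U* v` of the diagonalization, `y i` vanishes unless the `i`-th eigenvalue is `μ`. -/
lemma herm_mulVec {n : ℕ} (f : ℝ → ℝ) {A : Matrix (Fin n) (Fin n) ℂ} (hA : A.IsHermitian)
    {v : Fin n → ℂ} {μ : ℝ} (hv : A *ᵥ v = (μ : ℂ) • v) :
    herm f A *ᵥ v = (f μ : ℂ) • v := by
  set U : Matrix (Fin n) (Fin n) ℂ := (hA.eigenvectorUnitary : Matrix (Fin n) (Fin n) ℂ) with hU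
  have hUU : U * star U = 1 := Unitary.coe_mul_star_self _
  have hUU' : star U * U = 1 := Unitary.coe_star_mul_self _
  have hspec : A = U * diagonal (fun i => (hA.eigenvalues i : ℂ)) * star U := by
    have := hA.spectral_theorem
    rw [Unitary.conjStarAlgAut_apply] at this
    exact this
  set y := star U *ᵥ v with hy
  have hvy : v = U *ᵥ y := by rw [hy, mulVec_mulVec, hUU, one_mulVec]
  have h1 : diagonal (fun i => (hA.eigenvalues i : ℂ)) *ᵥ y = (μ : ℂ) • y := by
    have h2 : star U *ᵥ (A *ᵥ v) = (μ : ℂ) • y := by rw [hv, mulVec_smul]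
    rw [← h2]
    conv_rhs => rw [hspec]
    simp only [hy, mulVec_mulVec, ← Matrix.mul_assoc, hUU', Matrix.one_mul]
  have h3 : diagonal (fun i => (f (hA.eigenvalues i) : ℂ)) *ᵥ y = (f μ : ℂ) • y := by
    ext i
    have := congrFun h1 i
    simp only [mulVec_diagonal, Pi.smul_apply, smul_eq_mul] at this ⊢
    by_cases hyi : y i = 0
    · simp [hyi]
    · have h4 := mul_right_cancel₀ hyi this
      rw [Complex.ofReal_injective h4]
  unfold herm
  rw [dif_pos hA, ← hU, ← mulVec_mulVec, ← hy, ← mulVec_mulVec, h3, mulVec_smul, ← hvy]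

/-- The square root of a positive definite matrix is positive definite and squares to it. -/
lemma msqrt_spec {n : ℕ} {A : Matrix (Fin n) (Fin n) ℂ} (hA : A.PosDef) :
    (msqrt A).PosDef ∧ msqrt A * msqrt A = A := by
  have hH := hA.isHermitian
  set U : Matrix (Fin n) (Fin n) ℂ := (hH.eigenvectorUnitary : Matrix (Fin n) (Fin n) ℂ) with hU
  have hUU : U * star U = 1 := Unitary.coe_mul_star_self _
  have hUU' : star U * U = 1 := Unitary.coe_star_mul_self _
  have hspec : A = U * diagonal (fun i => (hH.eigenvalues i : ℂ)) * star U := by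
    have := hH.spectral_theorem
    rw [Unitary.conjStarAlgAut_apply] at this
    exact this
  have hdef : msqrt A = U * diagonal (fun i => (Real.sqrt (hH.eigenvalues i) : ℂ)) * star U := by
    unfold msqrt herm
    rw [dif_pos hH]
  constructor
  · rw [hdef]
    have hd : (diagonal (fun i => (Real.sqrt (hH.eigenvalues i) : ℂ))).PosDef := by
      apply PosDef.diagonal
      intro i
      have := Real.sqrt_pos.2 (hA.eigenvalues_pos i)
      exact_mod_cast this
    have hu : IsUnit U := IsUnit.of_mul_eq_one _ hUU
    exact (hu.posDef_star_right_conjugate_iff).2 hd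
  · rw [hdef]
    conv_rhs => rw [hspec]
    have : ∀ D : Matrix (Fin n) (Fin n) ℂ,
        U * D * star U * (U * D * star U) = U * (D * D) * star U := by
      intro D
      calc U * D * star U * (U * D * star U) = U * D * (star U * U) * D * star U := by
            simp only [Matrix.mul_assoc]
        _ = _ := by rw [hUU']; simp only [Matrix.mul_assoc, Matrix.mul_one]
    rw [this, diagonal_mul_diagonal]
    congr 3
    ext i
    rw [← Complex.ofReal_mul, Real.mul_self_sqrt (hA.eigenvalues_pos i).le]

lemma posSemidef_of_eigen {n : ℕ} {D : Matrix (Fin n) (Fin n) ℂ} (hD : D.IsHermitian)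
    (h : ∀ (μ : ℝ) (v : Fin n → ℂ), v ≠ 0 → D *ᵥ v = (μ : ℂ) • v → 0 ≤ μ) : D.PosSemidef := by
  rw [hD.posSemidef_iff_eigenvalues_nonneg]
  intro i
  refine h _ (hD.eigenvectorBasis i).ofLp ?_ ?_
  · intro h0
    exact hD.eigenvectorBasis.orthonormal.ne_zero i (by ext j; exact congrFun h0 j)
  · rw [hD.mulVec_eigenvectorBasis i]
    rfl

lemma eigen_nonneg_of_posSemidef {n : ℕ} {D : Matrix (Fin n) (Fin n) ℂ} (hD : D.PosSemidef)
    {μ : ℝ} {v : Fin n → ℂ} (hv : v ≠ 0) (h : D *ᵥ v = (μ : ℂ) • v) : 0 ≤ μ := by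
  have h1 := hD.dotProduct_mulVec_nonneg v
  rw [h, dotProduct_smul, smul_eq_mul] at h1
  have h2 : 0 < star v ⬝ᵥ v := dotProduct_star_self_pos_iff.2 hv
  have h3 := le_of_mul_le_mul_right (by simpa using h1 : 0 * (star v ⬝ᵥ v) ≤ (μ : ℂ) * _) h2
  exact_mod_cast h3

/-- Operator monotonicity of the square root. If `(Q - P) v = μ v`, then
`⟨v, (Q² - P²) v⟩ = μ ⟨v, (Q + P) v⟩`, which forces `0 ≤ μ`. -/
lemma le_of_sq_le {n : ℕ} {P Q : Matrix (Fin n) (Fin n) ℂ} (hP : P.PosDef) (hQ : Q.PosDef)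
    (h : (Q * Q - P * P).PosSemidef) : (Q - P).PosSemidef := by
  have hD : (Q - P).IsHermitian := hQ.isHermitian.sub hP.isHermitian
  refine posSemidef_of_eigen hD fun μ v hv hev => ?_
  have hS := (hQ.add hP).dotProduct_mulVec_pos hv
  have h1 := h.dotProduct_mulVec_nonneg v
  have hleft : star v ᵥ* (Q - P) = (μ : ℂ) • star v := by
    have := congrArg star hev
    rw [star_mulVec, hD.eq] at this
    rw [this]
    simp
  have hsum : (2 : ℂ) * (star v ⬝ᵥ (Q * Q - P * P) *ᵥ v) =
      2 * (μ * (star v ⬝ᵥ (Q + P) *ᵥ v)) := by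
    have e : (2 : ℂ) • (Q * Q - P * P) = (Q - P) * (Q + P) + (Q + P) * (Q - P) := by
      rw [two_smul]; noncomm_ring
    have e2 : (2 : ℂ) * (star v ⬝ᵥ (Q * Q - P * P) *ᵥ v) =
        star v ⬝ᵥ ((2 : ℂ) • (Q * Q - P * P)) *ᵥ v := by
      rw [smul_mulVec, dotProduct_smul, smul_eq_mul]
    rw [e2, e, add_mulVec, dotProduct_add, ← mulVec_mulVec, ← mulVec_mulVec, hev,
      dotProduct_mulVec, hleft, mulVec_smul, dotProduct_smul, smul_dotProduct, smul_eq_mul]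
    ring
  have h2 := mul_left_cancel₀ two_ne_zero hsum
  rw [h2] at h1
  have h3 := le_of_mul_le_mul_right (by simpa using h1 : 0 * _ ≤ (μ : ℂ) * _) hS
  exact_mod_cast h3

lemma conj_posDef {n : ℕ} {R G : Matrix (Fin n) (Fin n) ℂ} (hR : R.PosDef) (hG : G.PosDef) :
    (R * G * R).PosDef := by
  have := (hR.isUnit.posDef_star_right_conjugate_iff (x := G)).2 hG
  rwa [star_eq_conjTranspose, hR.isHermitian.eq] at this

lemma conj_posSemidef {n : ℕ} {R G : Matrix (Fin n) (Fin n) ℂ} (hR : R.PosDef) :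
    (R * G * R).PosSemidef ↔ G.PosSemidef := by
  have := hR.isUnit.posSemidef_star_right_conjugate_iff (x := G)
  rwa [star_eq_conjTranspose, hR.isHermitian.eq] at this

/-- Positive definite solutions `G` of `G X G = A` are monotone in `A`. -/
lemma riccati_mono {n : ℕ} {X G H : Matrix (Fin n) (Fin n) ℂ} (hX : X.PosDef) (hG : G.PosDef)
    (hH : H.PosDef) (h : (G * X * G - H * X * H).PosSemidef) : (G - H).PosSemidef := by
  obtain ⟨hR, hRR⟩ := msqrt_spec hX
  set R := msqrt X
  have h1 := le_of_sq_le (conj_posDef hR hH) (conj_posDef hR hG) (by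
    have e : R * G * R * (R * G * R) - R * H * R * (R * H * R) =
        R * (G * X * G - H * X * H) * R := by
      rw [← hRR]; noncomm_ring
    rw [e]
    exact (conj_posSemidef hR).2 h)
  rw [← conj_posSemidef hR]
  convert h1 using 1
  noncomm_ring

/-- `A ♯ X⁻¹` is a positive definite solution `G` of the Riccati equation `G X G = A`. -/
lemma geom_spec {n : ℕ} {A X : Matrix (Fin n) (Fin n) ℂ} (hA : A.PosDef) (hX : X.PosDef) :
    (geom A X⁻¹).PosDef ∧ geom A X⁻¹ * X * geom A X⁻¹ = A := by
  obtain ⟨hS, hSS⟩ := msqrt_spec hA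
  unfold geom
  set S := msqrt A
  obtain ⟨hT, hTT⟩ := msqrt_spec (conj_posDef hS.inv hX.inv)
  set T := msqrt (S⁻¹ * X⁻¹ * S⁻¹)
  refine ⟨conj_posDef hS hT, ?_⟩
  have hSu := (isUnit_iff_isUnit_det S).1 hS.isUnit
  have hTu := (isUnit_iff_isUnit_det T).1 hT.isUnit
  have hXu := (isUnit_iff_isUnit_det X).1 hX.isUnit
  have hinv : S * X * S = T⁻¹ * T⁻¹ := by
    rw [← Matrix.mul_inv_rev, hTT, Matrix.mul_inv_rev, Matrix.mul_inv_rev,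
      nonsing_inv_nonsing_inv _ hSu, nonsing_inv_nonsing_inv _ hXu, Matrix.mul_assoc]
  calc S * T * S * X * (S * T * S) = S * T * (S * X * S) * T * S := by
        simp only [Matrix.mul_assoc]
    _ = S * (T * T⁻¹) * (T⁻¹ * T) * S := by rw [hinv]; simp only [Matrix.mul_assoc]
    _ = A := by
        rw [mul_nonsing_inv _ hTu, nonsing_inv_mul _ hTu, Matrix.mul_one, Matrix.mul_one, hSS]

/-- The positive definite solution `H = √c X^{-1/2}` of `H X H = c I`, with its eigenvectors. -/
lemma scalar_spec {n : ℕ} {X : Matrix (Fin n) (Fin n) ℂ} (hX : X.PosDef) {c : ℝ} (hc : 0 < c) :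
    ∃ H : Matrix (Fin n) (Fin n) ℂ, H.PosDef ∧ H * X * H = c • (1 : Matrix (Fin n) (Fin n) ℂ) ∧
      ∀ (lam : ℝ) (v : Fin n → ℂ), 0 < lam → X *ᵥ v = (lam : ℂ) • v →
        H *ᵥ v = ((Real.sqrt c / Real.sqrt lam : ℝ) : ℂ) • v := by
  obtain ⟨hR, hRR⟩ := msqrt_spec hX
  have hev := fun (lam : ℝ) (v : Fin n → ℂ) (h : X *ᵥ v = (lam : ℂ) • v) =>
    herm_mulVec Real.sqrt hX.isHermitian h
  change ∀ (lam : ℝ) (v : Fin n → ℂ), X *ᵥ v = (lam : ℂ) • v → msqrt X *ᵥ v = _ at hev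
  set R := msqrt X
  have hRu := (isUnit_iff_isUnit_det R).1 hR.isUnit
  refine ⟨Real.sqrt c • R⁻¹, hR.inv.smul (Real.sqrt_pos.2 hc), ?_, ?_⟩
  · rw [← hRR]
    simp only [smul_mul_assoc, mul_smul_comm, smul_smul, Real.mul_self_sqrt hc.le]
    rw [← Matrix.mul_assoc, nonsing_inv_mul _ hRu, Matrix.one_mul, mul_nonsing_inv _ hRu]
  · intro lam v hl hv
    have h0 : (Real.sqrt lam : ℂ) ≠ 0 := by exact_mod_cast (Real.sqrt_pos.2 hl).ne'
    have h2 : v = (Real.sqrt lam : ℂ) • (R⁻¹ *ᵥ v) := by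
      rw [← mulVec_smul, ← hev lam v hv, mulVec_mulVec, nonsing_inv_mul _ hRu, one_mulVec]
    have h3 : R⁻¹ *ᵥ v = (Real.sqrt lam : ℂ)⁻¹ • v := by
      conv_rhs => rw [h2]
      rw [smul_smul, inv_mul_cancel₀ h0, one_smul]
    rw [smul_mulVec, h3]
    ext i
    simp only [Pi.smul_apply, Complex.real_smul, smul_eq_mul, Complex.ofReal_div]
    ring

lemma eigenvalue_pos {n : ℕ} {X : Matrix (Fin n) (Fin n) ℂ} (hX : X.PosDef)
    {μ : ℝ} {v : Fin n → ℂ} (hv : v ≠ 0) (h : X *ᵥ v = (μ : ℂ) • v) : 0 < μ := by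
  refine lt_of_le_of_ne (eigen_nonneg_of_posSemidef hX.posSemidef hv h) ?_
  rintro rfl
  have := hX.dotProduct_mulVec_pos hv
  rw [h] at this
  simp at this

lemma isHermitian_real_smul_one {n : ℕ} (c : ℝ) :
    (c • (1 : Matrix (Fin n) (Fin n) ℂ)).IsHermitian := by
  simp [IsHermitian, conjTranspose_smul]

theorem stmt18 (g : ℝ → ℝ)
    (hg_cont : ContinuousOn g (Set.Ioi 0))
    (hg_mono : StrictMonoOn g (Set.Ioi 0))
    (hg_one : g 1 = 0) (hg_deriv : HasDerivAt g 1 1)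
    (hg_opmono : ∀ (k : ℕ) (A B : Matrix (Fin k) (Fin k) ℂ),
      A.PosDef → B.PosDef → (B - A).PosSemidef → (herm g B - herm g A).PosSemidef)
    {m n : ℕ} (w : Fin m → ℝ) (hw : ∀ i, 0 < w i) (hw1 : ∑ i, w i = 1)
    (A : Fin m → Matrix (Fin n) (Fin n) ℂ) (hA : ∀ i, (A i).PosDef)
    (α β : ℝ) (hα : 0 < α) (hαβ : α ≤ β)
    (hlo : ∀ i, (A i - α • (1 : Matrix (Fin n) (Fin n) ℂ)).PosSemidef)
    (hhi : ∀ i, (β • (1 : Matrix (Fin n) (Fin n) ℂ) - A i).PosSemidef) :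
    ∀ X : Matrix (Fin n) (Fin n) ℂ, X.PosDef →
      ∑ i, w i • herm g (geom (A i) X⁻¹) = 0 →
      (X - α • (1 : Matrix (Fin n) (Fin n) ℂ)).PosSemidef ∧
      (β • (1 : Matrix (Fin n) (Fin n) ℂ) - X).PosSemidef := by
  intro X hX hsum
  have hβ : 0 < β := hα.trans_le hαβ
  constructor
  · obtain ⟨H, hH, hHX, hHev⟩ := scalar_spec hX hα
    have hle : ∀ i, (herm g (geom (A i) X⁻¹) - herm g H).PosSemidef := fun i => by
      obtain ⟨hG, hGX⟩ := geom_spec (hA i) hX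
      exact hg_opmono n _ _ hH hG (riccati_mono hX hG hH (by rw [hGX, hHX]; exact hlo i))
    have hneg : (-herm g H).PosSemidef := by
      have h1 : (∑ i, w i • (herm g (geom (A i) X⁻¹) - herm g H)).PosSemidef :=
        posSemidef_sum _ fun i _ => (hle i).smul (hw i).le
      simpa only [smul_sub, Finset.sum_sub_distrib, hsum, ← Finset.sum_smul, hw1, one_smul,
        zero_sub] using h1
    refine posSemidef_of_eigen (hX.isHermitian.sub (isHermitian_real_smul_one α))
      fun μ v hv hev => ?_
    have hXv : X *ᵥ v = ((μ + α : ℝ) : ℂ) • v := by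
      rw [sub_mulVec, smul_mulVec, one_mulVec, sub_eq_iff_eq_add] at hev
      rw [hev, Complex.ofReal_add, add_smul]
      rfl
    have hpos := eigenvalue_pos hX hv hXv
    have hgv := herm_mulVec g hH.isHermitian (hHev _ v hpos hXv)
    have hg0 : 0 ≤ -g (√α / √(μ + α)) :=
      eigen_nonneg_of_posSemidef hneg hv (by rw [neg_mulVec, hgv, Complex.ofReal_neg, neg_smul])
    have hs := Real.sqrt_pos.2 hpos
    have h1 : √α / √(μ + α) ≤ 1 :=
      (hg_mono.le_iff_le (Set.mem_Ioi.2 (div_pos (Real.sqrt_pos.2 hα) hs))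
        (Set.mem_Ioi.2 one_pos)).1 (by linarith)
    rw [div_le_one hs, Real.sqrt_le_sqrt_iff hpos.le] at h1
    linarith
  · obtain ⟨H, hH, hHX, hHev⟩ := scalar_spec hX hβ
    have hle : ∀ i, (herm g H - herm g (geom (A i) X⁻¹)).PosSemidef := fun i => by
      obtain ⟨hG, hGX⟩ := geom_spec (hA i) hX
      exact hg_opmono n _ _ hG hH (riccati_mono hX hH hG (by rw [hGX, hHX]; exact hhi i))
    have hnonneg : (herm g H).PosSemidef := by
      have h1 : (∑ i, w i • (herm g H - herm g (geom (A i) X⁻¹))).PosSemidef :=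
        posSemidef_sum _ fun i _ => (hle i).smul (hw i).le
      simpa only [smul_sub, Finset.sum_sub_distrib, hsum, ← Finset.sum_smul, hw1, one_smul,
        sub_zero] using h1
    refine posSemidef_of_eigen ((isHermitian_real_smul_one β).sub hX.isHermitian)
      fun μ v hv hev => ?_
    have hXv : X *ᵥ v = ((β - μ : ℝ) : ℂ) • v := by
      rw [sub_mulVec, smul_mulVec, one_mulVec, sub_eq_iff_eq_add] at hev
      rw [Complex.ofReal_sub, sub_smul, eq_sub_iff_add_eq', ← hev]
      rfl
    have hpos := eigenvalue_pos hX hv hXv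
    have hgv := herm_mulVec g hH.isHermitian (hHev _ v hpos hXv)
    have hg0 : 0 ≤ g (√β / √(β - μ)) := eigen_nonneg_of_posSemidef hnonneg hv hgv
    have hs := Real.sqrt_pos.2 hpos
    have h1 : 1 ≤ √β / √(β - μ) :=
      (hg_mono.le_iff_le (Set.mem_Ioi.2 one_pos)
        (Set.mem_Ioi.2 (div_pos (Real.sqrt_pos.2 hβ) hs))).1 (by linarith)
    rw [one_le_div hs, Real.sqrt_le_sqrt_iff hβ.le] at h1
    linarith
end
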